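/- Let 0 < r_a < r_s be real numbers, let d satisfy r_s − r_a ≤ d ≤ r_s + r_a, and let φ ∈ [0, π]. Then there exists a real ω with r_s² − 2·r_s·r_a·sin(ω)·sin(φ) + r_a² ≤ d² if and only if |π/2 − φ| ≤ ζ(d), where ζ(d) = arccos((r_s² + r_a² − d²)/(2·r_s·r_a)). (Equivalently, the orbit with inclination φ intersects the spherical cap of points on the sphere of radius r_s at distance at most d from A = (0,0,r_a) if and only if φ ∈ [π/2 − ζ(d), π/2 + ζ(d)].) -/

import Mathlib

/-!
Write `c = (r_s² + r_a² − d²) / (2 r_s r_a)`. Since `sin φ ≥ 0`, the squared distance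
from `A` is smallest at `ω = π/2`, so the orbit meets the cap iff `c ≤ sin φ`. The bounds on `d` say
exactly that `c ∈ [-1, 1]`, hence `cos (arccos c) = c`; as `sin φ = cos |π/2 − φ|` and `cos` is
strictly decreasing on `[0, π]`, the inequality `c ≤ sin φ` is equivalent to
`|π/2 − φ| ≤ arccos c`.
-/

/-- The orbit with inclination `φ` intersects the spherical cap of points at distance at
most `d` from `A = (0,0,r_a)` on the sphere of radius `r_s` if and only if
`|π/2 − φ| ≤ ζ(d)` where `ζ(d) = arccos((r_s² + r_a² − d²)/(2 r_s r_a))`. -/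
theorem orbit_meets_cap_iff (r_a r_s d φ : ℝ) (h0 : 0 < r_a) (h1 : r_a < r_s)
    (hd1 : r_s - r_a ≤ d) (hd2 : d ≤ r_s + r_a) (hφ : φ ∈ Set.Icc 0 Real.pi) :
    (∃ ω : ℝ, r_s ^ 2 - 2 * r_s * r_a * Real.sin ω * Real.sin φ + r_a ^ 2 ≤ d ^ 2) ↔
      |Real.pi / 2 - φ| ≤ Real.arccos ((r_s ^ 2 + r_a ^ 2 - d ^ 2) / (2 * r_s * r_a)) := by
  have hs : 0 < r_s := h0.trans h1
  have hpos : 0 < 2 * r_s * r_a := by positivity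
  have hsin : 0 ≤ Real.sin φ := Real.sin_nonneg_of_mem_Icc hφ
  have hc1 : (r_s ^ 2 + r_a ^ 2 - d ^ 2) / (2 * r_s * r_a) ≤ 1 := by
    rw [div_le_one hpos]
    nlinarith
  have hc2 : -1 ≤ (r_s ^ 2 + r_a ^ 2 - d ^ 2) / (2 * r_s * r_a) := by
    rw [le_div_iff₀ hpos]
    nlinarith
  have habs : |Real.pi / 2 - φ| ∈ Set.Icc 0 Real.pi := by
    refine ⟨abs_nonneg _, abs_le.2 ⟨?_, ?_⟩⟩ <;> linarith [hφ.1, hφ.2, Real.pi_pos]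
  rw [← Real.strictAntiOn_cos.le_iff_ge ⟨Real.arccos_nonneg _, Real.arccos_le_pi _⟩ habs,
    Real.cos_arccos hc2 hc1, Real.cos_abs, Real.cos_pi_div_two_sub, div_le_iff₀ hpos]
  constructor
  · rintro ⟨ω, hω⟩
    have h : Real.sin ω * Real.sin φ ≤ Real.sin φ :=
      mul_le_of_le_one_left hsin (Real.sin_le_one ω)
    linarith [mul_le_mul_of_nonneg_left h hpos.le]
  · intro h
    refine ⟨Real.pi / 2, ?_⟩
    rw [Real.sin_pi_div_two]
    linarith
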